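/- Let α > 0 and β > 0. Then the piecewise linear system Z_{α,β} possesses a sliding Shilnikov orbit Γ_{α,β} connecting the origin to itself through the point q = (3β/2, 3β²/(8α), 0). Precisely: (i) Z̃_{α,β}(0,0) = (0,0), Z̃_{α,β} is differentiable at (0,0), and the eigenvalues of its Jacobian there are non-real with positive real part, so the origin is a hyperbolic pseudo saddle–focus lying in Σˢ; (ii) q is a visible fold–regular point of X_{α,β}: the third component of X_{α,β} vanishes at q, its directional derivative along X_{α,β} at q equals β/2 > 0, and the third component of Y_{α,β} at q equals 3β²/(8α) > 0; (iii) there is a solution f : (−∞, 0] → ℝ² of f' = Z̃_{α,β}∘f with f(0) = (3β/2, 3β²/(8α)), f₂(t) < 3β²/(8α) for all t < 0, and f(t) → (0,0) as t → −∞; (iv) the solution φ of φ' = X_{α,β}∘φ with φ(0) = q satisfies φ₃(t) > 0 for t ∈ (0, 3β/(2α)) and φ(3β/(2α)) = (0,0,0). -/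

import Mathlib

/-!
The only nontrivial part is the sliding connection (iii); the flight of `X` from `q` is an explicit
cubic curve and the Jacobian at the origin has trace `α / (6β)` and determinant `2α² / (3β²)`.

With `x = β u`, `y = (3β² / (8α)) w` and time multiplied by `8α / (3β)`, the sliding field becomes
the parameter-free field
`u' = -(3/8) w / (2 - w)`, `w' = (u + w/8 - (9/8) w²) / (2 - w)`,
and the orbit in question starts at `(3/2, 1)` and is followed backward in time.

* The function `energy u w = e^{-6u} (w² - 8u/9 - 4/27)` is a first integral of the field without the
  term `w/8`; along the true field its derivative is `e^{-6u} w² / (4 (2 - w)) ≥ 0`. So it decreases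
  backward in time, and its sublevel set at the starting point is bounded:
  `-1/6 ≤ u ≤ 2`, `|w| < 7/5` (`bounds_of_energy_le`).
* The energy alone does not keep the orbit in `w < 1`. For this the parabola
  `u = barrier w = 1.19 w² - 0.03 w - 0.155` is used: for `-7/5 < w ≤ 1` the field crosses it
  transversally, so the region `u > barrier w` is backward invariant, and on its part of the line
  `w = 1` one has `u ≥ 1.005 > 1`, where `w' > 0`. Hence the backward orbit never reaches `w = 1`
  again (`orbit_confined`).
* For the convergence, `L = 16 e^{12} energy + u w` satisfies `L' ≥ (u² + w²) / 8` on the bounded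
  region, while `(u² + w²)' ≤ 5 (u² + w²)`. So `L` and `L - (u² + w²) / 40` are both monotone and
  bounded below, whence `u² + w²` has a limit at `-∞`, which must vanish
  (`tendsto_zero_of_lyapunov`).

Existence for all times is obtained by composing the field with the projection onto a box, which
makes it bounded and globally Lipschitz.
-/

open Set Filter Topology
open scoped NNReal

/-! ### Existence of the orbit -/

/-- A bounded, globally Lipschitz autonomous field has solutions on all of `ℝ`: Picard–Lindelöf
applies on each `[-(n+1), n+1]`, and the solutions agree by uniqueness. -/
theorem exists_global_solution {E : Type*} [NormedAddCommGroup E] [NormedSpace ℝ E]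
    [CompleteSpace E] {v : E → E} {K L : ℝ≥0} (hv : LipschitzWith K v)
    (hb : ∀ x, ‖v x‖ ≤ L) (x₀ : E) :
    ∃ γ : ℝ → E, γ 0 = x₀ ∧ ∀ t, HasDerivAt γ (v (γ t)) t := by
  have local_sol : ∀ n : ℕ, ∃ γ : ℝ → E, γ 0 = x₀ ∧
      ∀ t ∈ Ioo (-((n : ℝ) + 1)) (n + 1), HasDerivAt γ (v (γ t)) t := by
    intro n
    have hn : (0 : ℝ) ≤ (n : ℝ) + 1 := by positivity
    have h0 : (0 : ℝ) ∈ Icc (-((n : ℝ) + 1)) (n + 1) := ⟨by linarith, hn⟩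
    have hPL : IsPicardLindelof (fun _ : ℝ => v) (⟨0, h0⟩ : Icc (-((n : ℝ) + 1)) (n + 1))
        x₀ (L * (n + 1)) 0 L K :=
      IsPicardLindelof.of_time_independent (fun x _ => hb x) hv.lipschitzOnWith (by simp)
    obtain ⟨γ, h₁, h₂⟩ := hPL.exists_eq_forall_mem_Icc_hasDerivWithinAt₀
    exact ⟨γ, h₁, fun t ht =>
      (h₂ t (Ioo_subset_Icc_self ht)).hasDerivAt (Icc_mem_nhds ht.1 ht.2)⟩
  choose γ h₀ hγ using local_sol
  have agree : ∀ m n : ℕ, m ≤ n → EqOn (γ m) (γ n) (Ioo (-((m : ℝ) + 1)) (m + 1)) := by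
    intro m n hmn
    have hmn' : (m : ℝ) ≤ n := by exact_mod_cast hmn
    have hm : (0 : ℝ) ≤ m := by positivity
    refine ODE_solution_unique_of_mem_Ioo (v := fun _ => v) (s := fun _ => univ) (K := K)
      (t₀ := 0) (fun t _ => hv.lipschitzOnWith) ⟨by linarith, by linarith⟩
      (fun t ht => ⟨hγ m t ht, trivial⟩)
      (fun t ht => ⟨hγ n t ⟨by linarith [ht.1], by linarith [ht.2]⟩, trivial⟩) ?_
    rw [h₀, h₀]
  have mem : ∀ t : ℝ, t ∈ Ioo (-((⌈|t|⌉₊ : ℝ) + 1)) (⌈|t|⌉₊ + 1) := by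
    intro t
    have := Nat.le_ceil |t|
    rw [mem_Ioo, ← abs_lt]
    linarith
  have key : ∀ (n : ℕ), ∀ t ∈ Ioo (-((n : ℝ) + 1)) (n + 1), γ ⌈|t|⌉₊ t = γ n t := by
    intro n t ht
    rcases le_total ⌈|t|⌉₊ n with h | h
    · exact agree _ _ h (mem t)
    · exact (agree _ _ h ht).symm
  refine ⟨fun t => γ ⌈|t|⌉₊ t, by simp [h₀], fun t => ?_⟩
  refine (hγ _ t (mem t)).congr_of_eventuallyEq ?_
  filter_upwards [Ioo_mem_nhds (mem t).1 (mem t).2] with s hs using key _ s hs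

/-- A curve through `(3/2, 1)` that solves the rescaled sliding equation at every time at which it
lies in the box `[-1, 3] × [-2, 1]`. -/
theorem exists_truncated_flow :
    ∃ u w : ℝ → ℝ, u 0 = 3 / 2 ∧ w 0 = 1 ∧ Continuous u ∧ Continuous w ∧
      ∀ t, u t ∈ Icc (-1 : ℝ) 3 → w t ∈ Icc (-2 : ℝ) 1 →
        HasDerivAt u (-(3 / 8 * w t) / (2 - w t)) t ∧
        HasDerivAt w ((u t + w t / 8 - 9 / 8 * w t ^ 2) / (2 - w t)) t := by
  set V : ℝ × ℝ → ℝ × ℝ := fun p =>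
    (-(3 / 8 * p.2) / (2 - p.2), (p.1 + p.2 / 8 - 9 / 8 * p.2 ^ 2) / (2 - p.2)) with hV
  set B : Set (ℝ × ℝ) := Icc (-1 : ℝ) 3 ×ˢ Icc (-2 : ℝ) 1 with hB
  have hBc : IsCompact B := isCompact_Icc.prod isCompact_Icc
  have hsm : ∀ p ∈ B, ContDiffAt ℝ 1 V p := by
    rintro ⟨a, b⟩ ⟨-, hb⟩
    have : (2 : ℝ) - b ≠ 0 := by have := hb.2; simp only at this; linarith
    refine ContDiffAt.prodMk ?_ ?_
    · exact ContDiffAt.div (by fun_prop) (by fun_prop) this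
    · exact ContDiffAt.div (by fun_prop) (by fun_prop) this
  have hloc : LocallyLipschitzOn B V := by
    intro p hp
    obtain ⟨K, s, hs, h⟩ := (hsm p hp).exists_lipschitzOnWith
    exact ⟨K, s, mem_nhdsWithin_of_mem_nhds hs, h⟩
  obtain ⟨K, hK⟩ := hloc.exists_lipschitzOnWith_of_compact hBc
  obtain ⟨C, hC⟩ := hBc.exists_bound_of_continuousOn hK.continuousOn
  -- projection onto the box
  set c : ℝ × ℝ → ℝ × ℝ := fun p =>
    ((projIcc (-1 : ℝ) 3 (by norm_num) p.1 : ℝ),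
      (projIcc (-2 : ℝ) 1 (by norm_num) p.2 : ℝ)) with hc
  have hcB : ∀ p, c p ∈ B := fun p => ⟨Subtype.coe_prop _, Subtype.coe_prop _⟩
  have hcl : ∃ K', LipschitzWith K' c :=
    ⟨_, ((LipschitzWith.subtype_val _).comp
        ((LipschitzWith.projIcc _).comp LipschitzWith.prod_fst)).prodMk
      ((LipschitzWith.subtype_val _).comp
        ((LipschitzWith.projIcc _).comp LipschitzWith.prod_snd))⟩
  obtain ⟨K', hK'⟩ := hcl
  have hVc : LipschitzWith (K * K') (V ∘ c) := by
    rw [← lipschitzOnWith_univ]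
    exact hK.comp hK'.lipschitzOnWith (fun p _ => hcB p)
  obtain ⟨γ, h0, hγ⟩ := exists_global_solution (L := C.toNNReal) hVc
    (fun p => (hC _ (hcB p)).trans (Real.le_coe_toNNReal C)) ((3 / 2, 1) : ℝ × ℝ)
  have hγc : Continuous γ := continuous_iff_continuousAt.2 fun t => (hγ t).continuousAt
  refine ⟨fun t => (γ t).1, fun t => (γ t).2, by simp [h0], by simp [h0], by fun_prop, by fun_prop,
    fun t hu hw => ?_⟩
  have hct : c (γ t) = γ t := by
    ext
    · simp only [hc, projIcc_of_mem _ hu]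
    · simp only [hc, projIcc_of_mem _ hw]
  have h := hγ t
  simp only [Function.comp, hct] at h
  exact ⟨h.fst, h.snd⟩

/-! ### Confinement of the backward orbit -/

theorem eventually_gt_right {g : ℝ → ℝ} {d T : ℝ} (h : HasDerivAt g d T) (hd : 0 < d) :
    ∀ᶠ t in 𝓝[>] T, g T < g t := by
  have h1 := (hasDerivAt_iff_tendsto_slope.1 h).mono_left
    (nhdsWithin_mono T (fun t (ht : T < t) => ht.ne'))
  filter_upwards [h1.eventually (lt_mem_nhds hd), self_mem_nhdsWithin] with t ht (htT : T < t)
  rw [slope_def_field] at ht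
  have := (div_pos_iff_of_pos_right (sub_pos.2 htT)).1 ht
  linarith

theorem eventually_lt_left {g : ℝ → ℝ} {d T : ℝ} (h : HasDerivAt g d T) (hd : 0 < d) :
    ∀ᶠ t in 𝓝[<] T, g t < g T := by
  have h1 := (hasDerivAt_iff_tendsto_slope.1 h).mono_left
    (nhdsWithin_mono T (fun t (ht : t < T) => ht.ne))
  filter_upwards [h1.eventually (lt_mem_nhds hd), self_mem_nhdsWithin] with t ht (htT : t < T)
  rw [slope_def_field] at ht
  by_contra! hc
  have := div_nonpos_of_nonneg_of_nonpos (sub_nonneg.2 hc) (sub_nonpos.2 htT.le)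
  linarith

/-- First integral of the rescaled sliding field with the term `w/8` removed; nondecreasing along
the full field while `w < 2`. -/
noncomputable def energy (u w : ℝ) : ℝ := Real.exp (-6 * u) * (w ^ 2 - 8 / 9 * u - 4 / 27)

theorem hasDerivAt_energy {u w : ℝ → ℝ} {t : ℝ} (hwt : w t < 2)
    (hu : HasDerivAt u (-(3 / 8 * w t) / (2 - w t)) t)
    (hw : HasDerivAt w ((u t + w t / 8 - 9 / 8 * w t ^ 2) / (2 - w t)) t) :
    HasDerivAt (fun s => energy (u s) (w s))
      (Real.exp (-6 * u t) * w t ^ 2 / 4 / (2 - w t)) t := by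
  have h2 : 2 - w t ≠ 0 := by linarith
  have := ((hu.const_mul (-6)).exp).mul (((hw.pow 2).sub (hu.const_mul (8 / 9))).sub_const (4 / 27))
  refine (this.congr_deriv ?_)
  simp only [Pi.sub_apply, Pi.pow_apply]
  field_simp
  push_cast
  ring

/-- The energy at `(3/2, 1)` is `-(13/27) e^{-9}`, so the hypothesis reads
`w² - 8u/9 - 4/27 ≤ -(13/27) e^{6u-9}`; the bounds follow from `e^s > 0` and `e^s ≥ 1 + s`. -/
theorem bounds_of_energy_le {u w : ℝ} (h : energy u w ≤ energy (3 / 2) 1) :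
    -(1 / 6) ≤ u ∧ u ≤ 2 ∧ w ^ 2 < 196 / 100 := by
  have h1 : w ^ 2 - 8 / 9 * u - 4 / 27 ≤ -(13 / 27) * Real.exp (6 * u - 9) := by
    have e : Real.exp (6 * u - 9) = Real.exp (6 * u) * Real.exp (-6 * (3 / 2)) := by
      rw [← Real.exp_add]; ring_nf
    have e2 : Real.exp (6 * u) * Real.exp (-6 * u) = 1 := by
      rw [← Real.exp_add]; simp
    have := mul_le_mul_of_nonneg_left h (Real.exp_pos (6 * u)).le
    unfold energy at this
    rw [← mul_assoc, e2] at this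
    rw [e]
    linarith
  have h2 := Real.exp_pos (6 * u - 9)
  have h3 := Real.add_one_le_exp (6 * u - 9)
  have h4 := sq_nonneg w
  refine ⟨by linarith, by linarith, by linarith⟩

theorem energy_ge (u w : ℝ) : -(4 / 27) ≤ energy u w := by
  have e2 : Real.exp (6 * u) * Real.exp (-6 * u) = 1 := by
    rw [← Real.exp_add]; simp
  have h3 := Real.add_one_le_exp (6 * u)
  have h4 := Real.exp_pos (-6 * u)
  unfold energy
  nlinarith [mul_nonneg h4.le (sq_nonneg w), mul_nonneg h4.le (sub_nonneg.2 h3)]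

/-- The parabola `u = barrier w`. The coefficients are rational choices such that
`barrier 1 = 1.005 > 1` and the rescaled field points strictly into `u < barrier w` along the arc
`-7/5 < w ≤ 1`. -/
noncomputable def barrier (w : ℝ) : ℝ := 1.19 * w ^ 2 - 0.03 * w - 0.155

/-- The backward orbit of `(3/2, 1)` stays in `w < 1`. At the last time `T < 0` at which it is not in
the open region cut out by the box, `w < 1` and `barrier w < u`, the energy bounds exclude the sides
of the box, and on each of the two remaining boundary arcs the field points out of the region, so
the orbit could not be inside just after `T`. -/
theorem orbit_confined {u w : ℝ → ℝ} (hu0 : u 0 = 3 / 2) (hw0 : w 0 = 1)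
    (huc : Continuous u) (hwc : Continuous w)
    (hode : ∀ t, u t ∈ Icc (-1 : ℝ) 3 → w t ∈ Icc (-2 : ℝ) 1 →
        HasDerivAt u (-(3 / 8 * w t) / (2 - w t)) t ∧
        HasDerivAt w ((u t + w t / 8 - 9 / 8 * w t ^ 2) / (2 - w t)) t) :
    ∀ t < 0, w t < 1 ∧ -2 < w t ∧ -1 < u t ∧ u t < 3 := by
  set S : Set ℝ := {t | w t < 1 ∧ -2 < w t ∧ -1 < u t ∧ u t < 3 ∧ barrier (w t) < u t} with hS
  have hbc : Continuous (fun t => barrier (w t)) := by unfold barrier; fun_prop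
  have hSo : IsOpen S :=
    (isOpen_lt hwc continuous_const).inter <| (isOpen_lt continuous_const hwc).inter <|
    (isOpen_lt continuous_const huc).inter <| (isOpen_lt huc continuous_const).inter <|
    (isOpen_lt hbc huc)
  suffices h : ∀ t < 0, t ∈ S from fun t ht =>
    ⟨(h t ht).1, (h t ht).2.1, (h t ht).2.2.1, (h t ht).2.2.2.1⟩
  by_contra! hne
  obtain ⟨t₁, ht₁, ht₁S⟩ := hne
  have hnear : ∀ᶠ t in 𝓝[<] (0 : ℝ), t ∈ S := by
    have hd := (hode 0 (by rw [hu0]; norm_num) (by rw [hw0]; norm_num)).2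
    rw [hu0, hw0] at hd
    have h1 := eventually_lt_left hd (by norm_num)
    rw [hw0] at h1
    have h2 : ∀ᶠ t in 𝓝[<] (0 : ℝ), -2 < w t ∧ -1 < u t ∧ u t < 3 ∧ barrier (w t) < u t := by
      refine Filter.Eventually.filter_mono nhdsWithin_le_nhds ?_
      refine (hwc.continuousAt.eventually (lt_mem_nhds (by rw [hw0]; norm_num))).and <|
        (huc.continuousAt.eventually (lt_mem_nhds (by rw [hu0]; norm_num))).and <|
        (huc.continuousAt.eventually (gt_mem_nhds (by rw [hu0]; norm_num))).and <|
        hbc.continuousAt.eventually_lt huc.continuousAt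
          (by rw [hu0, hw0]; norm_num [barrier])
    exact h1.and h2
  obtain ⟨a, ha, haS⟩ := (mem_nhdsLT_iff_exists_Ioo_subset).1 hnear
  -- the last time before `0` at which the orbit is outside the region
  set B : Set ℝ := Sᶜ ∩ Iic a with hB
  have hle : ∀ t < 0, t ∉ S → t ≤ a := fun t ht hts => by
    by_contra! hc
    exact hts (haS ⟨hc, ht⟩)
  have hBn : B.Nonempty := ⟨t₁, ht₁S, hle t₁ ht₁ ht₁S⟩
  have hBb : BddAbove B := ⟨a, fun t ht => ht.2⟩
  have hBcl : IsClosed B := hSo.isClosed_compl.inter isClosed_Iic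
  set T := sSup B with hT
  have hTB : T ∈ B := hBcl.csSup_mem hBn hBb
  have hT0 : T < 0 := lt_of_le_of_lt hTB.2 ha
  have hTS : ∀ t, T < t → t < 0 → t ∈ S := fun t h1 h2 => by
    by_contra hc
    exact absurd (le_csSup hBb ⟨hc, hle t h2 hc⟩) (not_le.2 h1)
  have hcl : T ∈ closure S := by
    have : T ∈ closure (Ioo T 0) := by rw [closure_Ioo hT0.ne]; exact ⟨le_rfl, hT0.le⟩
    exact closure_mono (fun t ht => hTS t ht.1 ht.2) this
  have hT' : w T ≤ 1 ∧ -2 ≤ w T ∧ -1 ≤ u T ∧ u T ≤ 3 ∧ barrier (w T) ≤ u T := by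
    have hc : IsClosed {t | w t ≤ 1 ∧ -2 ≤ w t ∧ -1 ≤ u t ∧ u t ≤ 3 ∧ barrier (w t) ≤ u t} :=
      (isClosed_le hwc continuous_const).inter <| (isClosed_le continuous_const hwc).inter <|
      (isClosed_le continuous_const huc).inter <| (isClosed_le huc continuous_const).inter <|
      (isClosed_le hbc huc)
    have hsub : S ⊆ {t | w t ≤ 1 ∧ -2 ≤ w t ∧ -1 ≤ u t ∧ u t ≤ 3 ∧ barrier (w t) ≤ u t} :=
      fun t ht => ⟨ht.1.le, ht.2.1.le, ht.2.2.1.le, ht.2.2.2.1.le, ht.2.2.2.2.le⟩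
    exact closure_minimal hsub hc hcl
  have hmono : energy (u T) (w T) ≤ energy (u 0) (w 0) := by
    refine monotoneOn_of_hasDerivWithinAt_nonneg (D := Icc T 0)
      (f := fun s => energy (u s) (w s))
      (f' := fun t => Real.exp (-6 * u t) * w t ^ 2 / 4 / (2 - w t))
      (convex_Icc T 0) ?_ ?_ ?_ ⟨le_rfl, hT0.le⟩ ⟨hT0.le, le_rfl⟩ hT0.le
    · unfold energy; fun_prop
    · intro t ht
      rw [interior_Icc] at ht
      obtain ⟨h1, h2, h3, h4, -⟩ := hTS t ht.1 ht.2
      obtain ⟨hu, hw⟩ := hode t ⟨h3.le, h4.le⟩ ⟨h2.le, h1.le⟩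
      exact (hasDerivAt_energy (by linarith) hu hw).hasDerivWithinAt
    · intro t ht
      rw [interior_Icc] at ht
      have h1 := (hTS t ht.1 ht.2).1
      have : 0 < 2 - w t := by linarith
      positivity
  rw [hu0, hw0] at hmono
  obtain ⟨b1, b2, b3⟩ := bounds_of_energy_le hmono
  obtain ⟨c1, c2, c3, c4, c5⟩ := hT'
  have b4 : -1.4 < w T := by nlinarith
  obtain ⟨hu, hw⟩ := hode T ⟨c3, c4⟩ ⟨c2, c1⟩
  have hden : 0 < 2 - w T := by linarith
  have hright : ∀ᶠ t in 𝓝[>] T, t ∈ S := by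
    filter_upwards [Ioo_mem_nhdsGT hT0] with t ht using hTS t ht.1 ht.2
  rcases eq_or_lt_of_le c5 with hbar | hbar
  · have hd : HasDerivAt (fun s => barrier (w s) - u s)
        ((3 / 8 * w T + (2.38 * w T - 0.03) * (u T + w T / 8 - 9 / 8 * w T ^ 2))
          / (2 - w T)) T := by
      refine (((((hw.pow 2).const_mul 1.19).sub (hw.const_mul 0.03)).sub_const 0.155).sub
        hu).congr_deriv ?_
      field_simp
      push_cast
      ring
    have hpos : 0 < (3 / 8 * w T + (2.38 * w T - 0.03) * (u T + w T / 8 - 9 / 8 * w T ^ 2))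
        / (2 - w T) := by
      refine div_pos ?_ hden
      rw [← hbar, barrier]
      nlinarith [mul_nonneg (sq_nonneg (w T)) (by linarith : 0 ≤ w T + 1.4), sq_nonneg (w T + 0.2)]
    obtain ⟨t, h1, h2⟩ := ((eventually_gt_right hd hpos).and hright).exists
    have := h2.2.2.2.2
    linarith
  rcases eq_or_lt_of_le c1 with hone | hone
  · have hpos : 0 < (u T + w T / 8 - 9 / 8 * w T ^ 2) / (2 - w T) := by
      refine div_pos ?_ hden
      rw [hone] at hbar ⊢
      norm_num [barrier] at hbar
      linarith
    obtain ⟨t, h1, h2⟩ := ((eventually_gt_right hw hpos).and hright).exists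
    have := h2.1
    linarith
  exact hTB.1 ⟨hone, by linarith, by linarith, by linarith, hbar⟩

/-! ### Convergence to the origin -/

/-- If `L' ≥ c E ≥ 0` and `E' ≤ C E` on `(-∞, 0]`, with `L - (c/C) E` bounded below, then `E → 0` at
`-∞`: both `L` and `L - (c/C) E` are monotone, hence convergent, so `E` converges, and a positive
limit would force `L → -∞`. -/
theorem tendsto_zero_of_lyapunov {L E L' E' : ℝ → ℝ} {c C m : ℝ} (hc : 0 < c) (hC : 0 < C)
    (hL : ∀ t ≤ 0, HasDerivAt L (L' t) t) (hE : ∀ t ≤ 0, HasDerivAt E (E' t) t)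
    (hLE : ∀ t ≤ 0, c * E t ≤ L' t) (hEE : ∀ t ≤ 0, E' t ≤ C * E t)
    (hE0 : ∀ t ≤ 0, 0 ≤ E t) (hLm : ∀ t ≤ 0, m ≤ L t - c / C * E t) :
    Tendsto E atBot (𝓝 0) := by
  -- a function monotone on `Iic 0` and bounded below there has a limit at `-∞`
  have conv : ∀ (g g' : ℝ → ℝ), (∀ t ≤ 0, HasDerivAt g (g' t) t) → (∀ t ≤ 0, 0 ≤ g' t) →
      (∀ t ≤ 0, m ≤ g t) → ∃ l, Tendsto g atBot (𝓝 l) := by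
    intro g g' hg hg' hm
    have hmon : MonotoneOn g (Iic 0) := by
      refine monotoneOn_of_hasDerivWithinAt_nonneg (f' := g') (convex_Iic 0)
        (fun t ht => (hg t ht).continuousAt.continuousWithinAt) ?_ ?_
      · intro t ht
        exact (hg t (mem_Iic.1 (interior_subset ht))).hasDerivWithinAt
      · intro t ht
        exact hg' t (mem_Iic.1 (interior_subset ht))
    have hmon' : Monotone (fun t => g (min t 0)) := fun a b hab =>
      hmon (min_le_right a 0) (min_le_right b 0) (min_le_min_right 0 hab)
    refine ⟨_, (tendsto_atBot_ciInf hmon' ⟨m, ?_⟩).congr' ?_⟩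
    · rintro _ ⟨t, rfl⟩
      exact hm _ (min_le_right t 0)
    · filter_upwards [eventually_le_atBot 0] with t ht
      rw [min_eq_left ht]
  have hcC : 0 < c / C := div_pos hc hC
  obtain ⟨l, hl⟩ := conv L L' hL (fun t ht => (mul_nonneg hc.le (hE0 t ht)).trans (hLE t ht))
    (fun t ht => (hLm t ht).trans (by nlinarith [mul_nonneg hcC.le (hE0 t ht)]))
  obtain ⟨l', hl'⟩ := conv (fun t => L t - c / C * E t) (fun t => L' t - c / C * E' t)
    (fun t ht => (hL t ht).sub ((hE t ht).const_mul _))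
    (fun t ht => by
      have h1 := mul_le_mul_of_nonneg_left (hEE t ht) hcC.le
      have h2 : c / C * (C * E t) = c * E t := by field_simp
      linarith [hLE t ht]) hLm
  have hEl : Tendsto E atBot (𝓝 ((l - l') / (c / C))) := by
    refine ((hl.sub hl').div_const (c / C)).congr (fun t => ?_)
    field_simp
    ring
  set e := (l - l') / (c / C) with he
  have he0 : 0 ≤ e := ge_of_tendsto hEl (by
    filter_upwards [eventually_le_atBot 0] with t ht using hE0 t ht)
  rcases he0.eq_or_lt with h0 | h0
  · rwa [h0]
  exfalso
  -- otherwise `L` would decrease at a definite rate as `t → -∞`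
  obtain ⟨a, ha⟩ := eventually_atBot.1 (hEl.eventually (lt_mem_nhds (half_lt_self h0)))
  set b := min a 0 with hb
  have hmon : MonotoneOn (fun t => L t - c * (e / 2) * t) (Iic b) := by
    refine monotoneOn_of_hasDerivWithinAt_nonneg (f' := fun t => L' t - c * (e / 2) * 1)
      (convex_Iic b) ?_ ?_ ?_
    · intro t ht
      have := (hL t (le_trans ht (min_le_right _ _))).continuousAt
      exact ContinuousAt.continuousWithinAt (by fun_prop)
    · intro t ht
      have ht' : t ≤ b := mem_Iic.1 (interior_subset ht)
      exact ((hL t (le_trans ht' (min_le_right _ _))).sub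
        ((hasDerivAt_id t).const_mul _)).hasDerivWithinAt
    · intro t ht
      have ht' : t ≤ b := mem_Iic.1 (interior_subset ht)
      have h1 := ha t (le_trans ht' (min_le_left _ _))
      have h2 := hLE t (le_trans ht' (min_le_right _ _))
      nlinarith
  have hbot : Tendsto (fun t => (L b - c * (e / 2) * b) + c * (e / 2) * t) atBot atBot :=
    tendsto_atBot_add_const_left _ _ (tendsto_id.const_mul_atBot (by positivity))
  obtain ⟨t, h1, h2⟩ := ((hbot.eventually (eventually_lt_atBot m)).and
    (eventually_le_atBot b)).exists
  have h3 := hmon (show t ∈ Iic b from h2) self_mem_Iic h2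
  have ht0 : t ≤ 0 := h2.trans (min_le_right _ _)
  have h4 := hLm t ht0
  have h5 := mul_nonneg hcC.le (hE0 t ht0)
  simp only at h3
  linarith

/-- The sliding orbit in the coordinates `(u, w)`. -/
theorem exists_scaled_orbit :
    ∃ u w : ℝ → ℝ, u 0 = 3 / 2 ∧ w 0 = 1 ∧ (∀ t < 0, w t < 1) ∧
      (∀ t ≤ 0, HasDerivAt u (-(3 / 8 * w t) / (2 - w t)) t ∧
        HasDerivAt w ((u t + w t / 8 - 9 / 8 * w t ^ 2) / (2 - w t)) t) ∧
      Tendsto u atBot (𝓝 0) ∧ Tendsto w atBot (𝓝 0) := by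
  obtain ⟨u, w, hu0, hw0, huc, hwc, hode⟩ := exists_truncated_flow
  have hconf := orbit_confined hu0 hw0 huc hwc hode
  have hw1 : ∀ t ≤ 0, w t ≤ 1 := fun t ht => by
    rcases ht.eq_or_lt with rfl | h
    · exact hw0.le
    · exact (hconf t h).1.le
  have hode' : ∀ t ≤ 0, HasDerivAt u (-(3 / 8 * w t) / (2 - w t)) t ∧
      HasDerivAt w ((u t + w t / 8 - 9 / 8 * w t ^ 2) / (2 - w t)) t := fun t ht => by
    rcases ht.eq_or_lt with rfl | h
    · exact hode 0 (by rw [hu0]; norm_num) (by rw [hw0]; norm_num)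
    · obtain ⟨h1, h2, h3, h4⟩ := hconf t h
      exact hode t ⟨h3.le, h4.le⟩ ⟨h2.le, h1.le⟩
  have hen : ∀ t ≤ 0, HasDerivAt (fun s => energy (u s) (w s))
      (Real.exp (-6 * u t) * w t ^ 2 / 4 / (2 - w t)) t := fun t ht =>
    hasDerivAt_energy (by linarith [hw1 t ht]) (hode' t ht).1 (hode' t ht).2
  have hbd : ∀ t ≤ 0, -(1 / 6) ≤ u t ∧ u t ≤ 2 ∧ w t ^ 2 < 196 / 100 := by
    intro t ht
    apply bounds_of_energy_le
    rw [← hu0, ← hw0]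
    refine monotoneOn_of_hasDerivWithinAt_nonneg (D := Iic 0)
      (f := fun s => energy (u s) (w s))
      (f' := fun t => Real.exp (-6 * u t) * w t ^ 2 / 4 / (2 - w t))
      (convex_Iic 0) (fun s hs => (hen s hs).continuousAt.continuousWithinAt)
      (fun s hs => (hen s (mem_Iic.1 (interior_subset hs))).hasDerivWithinAt) ?_
      ht self_mem_Iic ht
    intro s hs
    have : 0 < 2 - w s := by linarith [hw1 s (mem_Iic.1 (interior_subset hs))]
    positivity
  have hE : Tendsto (fun t => u t ^ 2 + w t ^ 2) atBot (𝓝 0) := by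
    refine tendsto_zero_of_lyapunov (c := 1 / 8) (C := 5) (m := -(16 * Real.exp 12) - 10)
      (L := fun t => 16 * Real.exp 12 * energy (u t) (w t) + u t * w t)
      (L' := fun t => 16 * Real.exp 12 * (Real.exp (-6 * u t) * w t ^ 2 / 4 / (2 - w t))
        + (u t ^ 2 + u t * w t / 8 - 3 / 8 * w t ^ 2 - 9 / 8 * u t * w t ^ 2) / (2 - w t))
      (E' := fun t => (5 / 4 * u t * w t + w t ^ 2 / 4 - 9 / 4 * w t ^ 3) / (2 - w t))
      (by norm_num) (by norm_num) ?_ ?_ ?_ ?_ ?_ ?_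
    · intro t ht
      obtain ⟨hu, hw⟩ := hode' t ht
      have h2 : 2 - w t ≠ 0 := by linarith [hw1 t ht]
      refine (((hen t ht).const_mul _).add (hu.mul hw)).congr_deriv ?_
      field_simp
      ring
    · intro t ht
      obtain ⟨hu, hw⟩ := hode' t ht
      have h2 : 2 - w t ≠ 0 := by linarith [hw1 t ht]
      refine ((hu.pow 2).add (hw.pow 2)).congr_deriv ?_
      field_simp
      push_cast
      ring
    · intro t ht
      obtain ⟨b1, b2, b3⟩ := hbd t ht
      have h1 := hw1 t ht
      have hwl : -1.4 ≤ w t := by nlinarith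
      have hden : 0 < 2 - w t := by linarith
      -- `u ≤ 2` turns the weight of the energy into `4 w²` at least
      have hexp : 1 ≤ Real.exp 12 * Real.exp (-6 * u t) := by
        rw [← Real.exp_add]
        exact Real.one_le_exp (by linarith)
      have h3 : 4 * w t ^ 2 ≤ 4 * (Real.exp 12 * Real.exp (-6 * u t)) * w t ^ 2 := by
        nlinarith [mul_le_mul_of_nonneg_right hexp (sq_nonneg (w t))]
      have h4 : u t ^ 2 / 2 - 3 * w t ^ 2 ≤
          u t ^ 2 + u t * w t / 8 - 3 / 8 * w t ^ 2 - 9 / 8 * u t * w t ^ 2 := by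
        nlinarith [mul_nonneg (sub_nonneg.2 b2) (sq_nonneg (w t)), sq_nonneg (u t + w t / 8),
          sq_nonneg (w t), sq_nonneg (u t)]
      have h5 : 16 * Real.exp 12 * (Real.exp (-6 * u t) * w t ^ 2 / 4 / (2 - w t))
          + (u t ^ 2 + u t * w t / 8 - 3 / 8 * w t ^ 2 - 9 / 8 * u t * w t ^ 2) / (2 - w t)
          = (4 * (Real.exp 12 * Real.exp (-6 * u t)) * w t ^ 2
            + (u t ^ 2 + u t * w t / 8 - 3 / 8 * w t ^ 2 - 9 / 8 * u t * w t ^ 2))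
            / (2 - w t) := by
        field_simp
        ring
      rw [h5, le_div_iff₀ hden]
      nlinarith [mul_nonneg (by linarith : 0 ≤ w t + 2) (sq_nonneg (w t)),
        mul_nonneg (by linarith : 0 ≤ w t + 2) (sq_nonneg (u t))]
    · intro t ht
      obtain ⟨b1, b2, b3⟩ := hbd t ht
      have h1 := hw1 t ht
      have hwl : -1.4 ≤ w t := by nlinarith
      have hden : 0 < 2 - w t := by linarith
      rw [div_le_iff₀ hden]
      have h3 : 5 * (u t ^ 2 + w t ^ 2) ≤ 5 * (u t ^ 2 + w t ^ 2) * (2 - w t) := by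
        nlinarith [mul_nonneg (sub_nonneg.2 h1) (sq_nonneg (w t)),
          mul_nonneg (sub_nonneg.2 h1) (sq_nonneg (u t))]
      nlinarith [sq_nonneg (u t - w t), sq_nonneg (u t), sq_nonneg (w t),
        mul_nonneg (by linarith : 0 ≤ w t + 1.4) (sq_nonneg (w t))]
    · intro t ht
      positivity
    · intro t ht
      obtain ⟨b1, b2, b3⟩ := hbd t ht
      have h1 := energy_ge (u t) (w t)
      have h2 := Real.exp_pos 12
      nlinarith [sq_nonneg (u t + w t),
        mul_nonneg (by linarith : 0 ≤ u t + 1 / 6) (sub_nonneg.2 b2)]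
  refine ⟨u, w, hu0, hw0, fun t ht => (hconf t ht).1, hode', ?_, ?_⟩
  · refine squeeze_zero_norm (fun t => ?_) (by simpa using hE.sqrt)
    exact Real.abs_le_sqrt (by nlinarith [sq_nonneg (w t)])
  · refine squeeze_zero_norm (fun t => ?_) (by simpa using hE.sqrt)
    exact Real.abs_le_sqrt (by nlinarith [sq_nonneg (u t)])

/-! ### The four parts of the theorem -/

/-- Undoing the rescaling of `exists_scaled_orbit`. -/
theorem sliding_orbit (α β : ℝ) (hα : 0 < α) (hβ : 0 < β)
    (Zt : ℝ × ℝ → ℝ × ℝ)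
    (hZt : ∀ p : ℝ × ℝ, Zt p =
      ((-(α * p.2)) / (3 * β ^ 2 / (4 * α) - p.2),
       (3 * β ^ 2 * p.1 / (8 * α) + β * p.2 / 8 - 3 * α * p.2 ^ 2 / β)
         / (3 * β ^ 2 / (4 * α) - p.2))) :
    ∃ f : ℝ → ℝ × ℝ,
      f 0 = (3 * β / 2, 3 * β ^ 2 / (8 * α)) ∧
      (∀ t : ℝ, t ≤ 0 → HasDerivAt f (Zt (f t)) t) ∧
      (∀ t : ℝ, t < 0 → (f t).2 < 3 * β ^ 2 / (8 * α)) ∧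
      Filter.Tendsto f Filter.atBot (nhds (0, 0)) := by
  obtain ⟨u, w, hu0, hw0, hw1, hode, hut, hwt⟩ := exists_scaled_orbit
  have hk : 0 < 8 * α / (3 * β) := by positivity
  have hc : 0 < 3 * β ^ 2 / (8 * α) := by positivity
  refine ⟨fun t => (β * u (8 * α / (3 * β) * t), 3 * β ^ 2 / (8 * α) * w (8 * α / (3 * β) * t)),
    ?_, ?_, ?_, ?_⟩
  · simp only [mul_zero, hu0, hw0]
    ext <;> simp
    ring
  · intro t ht
    set s := 8 * α / (3 * β) * t with hs
    have hs0 : s ≤ 0 := mul_nonpos_of_nonneg_of_nonpos hk.le ht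
    have hws : w s ≤ 1 := by
      rcases hs0.eq_or_lt with h | h
      · rw [h, hw0]
      · exact (hw1 s h).le
    have hden : 2 - w s ≠ 0 := by linarith
    obtain ⟨hu, hw⟩ := hode s hs0
    have hlin : HasDerivAt (fun t : ℝ => 8 * α / (3 * β) * t) (8 * α / (3 * β)) t := by
      simpa using (hasDerivAt_id t).const_mul (8 * α / (3 * β))
    have h1 := (HasDerivAt.comp t (h₂ := u) hu hlin).const_mul β
    have h2 := (HasDerivAt.comp t (h₂ := w) hw hlin).const_mul (3 * β ^ 2 / (8 * α))
    have hden' : 3 * β ^ 2 / (4 * α) - 3 * β ^ 2 / (8 * α) * w s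
        = 3 * β ^ 2 / (8 * α) * (2 - w s) := by field_simp; ring
    refine (h1.prodMk h2).congr_deriv ?_
    rw [hZt]
    simp only
    rw [← hs, hden']
    ext
    · simp only
      field_simp
    · simp only
      field_simp
      ring
  · intro t ht
    have := hw1 _ (mul_neg_of_pos_of_neg hk ht)
    simp only
    nlinarith
  · have hs : Tendsto (fun t : ℝ => 8 * α / (3 * β) * t) atBot atBot :=
      tendsto_id.const_mul_atBot hk
    have h1 := ((hut.comp hs).const_mul β)
    have h2 := ((hwt.comp hs).const_mul (3 * β ^ 2 / (8 * α)))
    rw [mul_zero] at h1 h2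
    exact h1.prodMk_nhds h2

theorem flight_orbit (α β : ℝ) (hα : 0 < α)
    (X : ℝ × ℝ × ℝ → ℝ × ℝ × ℝ)
    (hX : ∀ p : ℝ × ℝ × ℝ, X p = (-α, p.1 - β, p.2.1 - 3 * β ^ 2 / (8 * α))) :
    ∃ φ : ℝ → ℝ × ℝ × ℝ,
      φ 0 = (3 * β / 2, 3 * β ^ 2 / (8 * α), 0) ∧
      (∀ t : ℝ, HasDerivAt φ (X (φ t)) t) ∧
      (∀ t ∈ Set.Ioo (0 : ℝ) (3 * β / (2 * α)), 0 < (φ t).2.2) ∧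
      φ (3 * β / (2 * α)) = (0, 0, 0) := by
  refine ⟨fun t => (3 * β / 2 - α * t, 3 * β ^ 2 / (8 * α) + β / 2 * t - α / 2 * t ^ 2,
    β / 4 * t ^ 2 - α / 6 * t ^ 3), by simp, fun t => ?_, fun t ht => ?_, ?_⟩
  · rw [hX]
    refine HasDerivAt.prodMk ?_ (HasDerivAt.prodMk ?_ ?_)
    · refine (((hasDerivAt_id t).const_mul α).const_sub (3 * β / 2)).congr_deriv ?_
      ring
    · refine ((((hasDerivAt_id t).const_mul (β / 2)).const_add (3 * β ^ 2 / (8 * α))).sub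
        ((hasDerivAt_pow 2 t).const_mul (α / 2))).congr_deriv ?_
      push_cast
      ring
    · refine (((hasDerivAt_pow 2 t).const_mul (β / 4)).sub
        ((hasDerivAt_pow 3 t).const_mul (α / 6))).congr_deriv ?_
      push_cast
      ring
  · have h1 : t * (2 * α) < 3 * β := (lt_div_iff₀ (by positivity)).1 ht.2
    have h2 : 0 < t ^ 2 := pow_pos ht.1 2
    simp only
    nlinarith [mul_pos h2 (sub_pos.2 h1)]
  · ext
    · simp only; field_simp; ring
    · simp only; field_simp; ring
    · simp only; field_simp; ring

theorem origin_saddle_focus (α β : ℝ) (hα : 0 < α) (hβ : 0 < β)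
    (Zt : ℝ × ℝ → ℝ × ℝ)
    (hZt : ∀ p : ℝ × ℝ, Zt p =
      ((-(α * p.2)) / (3 * β ^ 2 / (4 * α) - p.2),
       (3 * β ^ 2 * p.1 / (8 * α) + β * p.2 / 8 - 3 * α * p.2 ^ 2 / β)
         / (3 * β ^ 2 / (4 * α) - p.2))) :
    ∃ L : ℝ × ℝ →L[ℝ] ℝ × ℝ, HasFDerivAt Zt L (0, 0) ∧
        ∃ lam : ℂ, lam.im ≠ 0 ∧ 0 < lam.re ∧
          (let M : Matrix (Fin 2) (Fin 2) ℂ :=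
            !![((L (1, 0)).1 : ℂ), ((L (0, 1)).1 : ℂ);
               ((L (1, 0)).2 : ℂ), ((L (0, 1)).2 : ℂ)]
           (M - lam • (1 : Matrix (Fin 2) (Fin 2) ℂ)).det = 0 ∧
           (M - (starRingEnd ℂ) lam • (1 : Matrix (Fin 2) (Fin 2) ℂ)).det = 0) := by
  have hD : (3 * β ^ 2 / (4 * α)) ≠ 0 := by positivity
  obtain ⟨L, hL, e1, e2, e3, e4⟩ : ∃ L : ℝ × ℝ →L[ℝ] ℝ × ℝ, HasFDerivAt Zt L (0, 0) ∧
      (L (1, 0)).1 = 0 ∧ (L (0, 1)).1 = -(4 * α ^ 2 / (3 * β ^ 2)) ∧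
      (L (1, 0)).2 = 1 / 2 ∧ (L (0, 1)).2 = α / (6 * β) := by
    have hdiff : DifferentiableAt ℝ Zt (0, 0) := by
      rw [funext hZt]
      have hne : 3 * β ^ 2 / (4 * α) - ((0, 0) : ℝ × ℝ).2 ≠ 0 := by simpa using hD
      have hc : ContDiffAt ℝ 1 (fun p : ℝ × ℝ =>
          ((-(α * p.2)) / (3 * β ^ 2 / (4 * α) - p.2),
           (3 * β ^ 2 * p.1 / (8 * α) + β * p.2 / 8 - 3 * α * p.2 ^ 2 / β)
             / (3 * β ^ 2 / (4 * α) - p.2))) (0, 0) :=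
        ContDiffAt.prodMk (ContDiffAt.div (by fun_prop) (by fun_prop) hne)
          (ContDiffAt.div (by fun_prop) (by fun_prop) hne)
      exact hc.differentiableAt one_ne_zero
    have hL := hdiff.hasFDerivAt
    -- the columns of the Jacobian are the derivatives along the coordinate axes
    have col1 : HasDerivAt (fun s : ℝ => Zt (s, 0)) (0, 1 / 2) 0 := by
      have : (fun s : ℝ => Zt (s, 0)) = fun s => ((0 : ℝ), 1 / 2 * s) := by
        funext s
        rw [hZt]
        ext
        · simp
        · simp only; field_simp; ring
      rw [this]
      refine (hasDerivAt_const _ _).prodMk ?_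
      exact ((hasDerivAt_id (0 : ℝ)).const_mul (1 / 2)).congr_deriv (by norm_num)
    have col2 : HasDerivAt (fun s : ℝ => Zt (0, s))
        (-(4 * α ^ 2 / (3 * β ^ 2)), α / (6 * β)) 0 := by
      rw [show (fun s : ℝ => Zt (0, s)) = _ from funext fun s => hZt (0, s)]
      have hden : HasDerivAt (fun s : ℝ => 3 * β ^ 2 / (4 * α) - s) (-1) 0 :=
        (hasDerivAt_id (0 : ℝ)).const_sub _
      have hne : 3 * β ^ 2 / (4 * α) - 0 ≠ 0 := by simpa using hD
      refine HasDerivAt.prodMk ?_ ?_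
      · refine ((((hasDerivAt_id (0 : ℝ)).const_mul α).neg).div hden hne).congr_deriv ?_
        simp
        field_simp
      · have hn : HasDerivAt
            (fun s : ℝ => 3 * β ^ 2 * 0 / (8 * α) + β * s / 8 - 3 * α * s ^ 2 / β) (β / 8) 0 := by
          refine (((((hasDerivAt_id (0 : ℝ)).const_mul β).div_const 8).const_add _).sub
            (((hasDerivAt_pow 2 (0 : ℝ)).const_mul (3 * α)).div_const β)).congr_deriv ?_
          simp
        refine (hn.div hden hne).congr_deriv ?_
        simp
        field_simp
        ring
    have i1 : HasDerivAt (fun s : ℝ => ((s, 0) : ℝ × ℝ)) (1, 0) 0 :=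
      (hasDerivAt_id _).prodMk (hasDerivAt_const _ _)
    have i2 : HasDerivAt (fun s : ℝ => ((0, s) : ℝ × ℝ)) (0, 1) 0 :=
      (hasDerivAt_const _ _).prodMk (hasDerivAt_id _)
    have c1 := (HasFDerivAt.comp_hasDerivAt (0 : ℝ) (l := Zt) (f := fun s : ℝ => ((s, 0) : ℝ × ℝ)) hL i1).unique col1
    have c2 := (HasFDerivAt.comp_hasDerivAt (0 : ℝ) (l := Zt) (f := fun s : ℝ => ((0, s) : ℝ × ℝ)) hL i2).unique col2
    exact ⟨_, hL, by rw [c1], by rw [c2], by rw [c1], by rw [c2]⟩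
  -- trace `α / (6β)`, determinant `2α² / (3β²)`, discriminant `-95 α² / (36 β²)`
  refine ⟨L, hL, ⟨α / (12 * β), Real.sqrt 95 * α / (12 * β)⟩, ?_, ?_, ?_⟩
  · simp only
    positivity
  · simp only
    positivity
  · have hs : Real.sqrt 95 ^ 2 = 95 := Real.sq_sqrt (by norm_num)
    simp only [Matrix.det_fin_two, Matrix.sub_apply, Matrix.smul_apply,
      Matrix.one_apply]
    generalize (L (1, 0)).1 = a at e1 ⊢
    generalize (L (0, 1)).1 = b at e2 ⊢
    generalize (L (1, 0)).2 = c at e3 ⊢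
    generalize (L (0, 1)).2 = d at e4 ⊢
    constructor
    · apply Complex.ext
      · simp
        simp only [e1, e2, e3, e4]
        field_simp
        rw [hs]
        ring
      · simp
        simp only [e1, e4]
        field_simp
        ring
    · apply Complex.ext
      · simp
        simp only [e1, e2, e3, e4]
        field_simp
        rw [hs]
        ring
      · simp
        simp only [e1, e4]
        field_simp
        ring

/- STATEMENT 6: The piecewise linear system Z_{α,β} possesses a sliding Shilnikov
orbit connecting the origin to itself through q = (3β/2, 3β²/(8α), 0):
(i) the origin is a hyperbolic pseudo saddle–focus of the sliding vector field
Z̃_{α,β}, lying in Σˢ; (ii) q is a visible fold–regular point of X_{α,β};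
(iii) the sliding orbit through (3β/2, 3β²/(8α)) tends backward in time to
(0,0) inside Σˢ; (iv) the orbit of X_{α,β} from q reaches the origin in time
3β/(2α), staying in z > 0 in between. -/
theorem sliding_Shilnikov_orbit_exists (α β : ℝ) (hα : 0 < α) (hβ : 0 < β)
    (X Y : ℝ × ℝ × ℝ → ℝ × ℝ × ℝ)
    (hX : ∀ p : ℝ × ℝ × ℝ, X p = (-α, p.1 - β, p.2.1 - 3 * β ^ 2 / (8 * α)))
    (hY : ∀ p : ℝ × ℝ × ℝ, Y p = (α, (3 * α / β) * p.2.1 + β, 3 * β ^ 2 / (8 * α)))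
    (Zt : ℝ × ℝ → ℝ × ℝ)
    (hZt : ∀ p : ℝ × ℝ, Zt p =
      ((-(α * p.2)) / (3 * β ^ 2 / (4 * α) - p.2),
       (3 * β ^ 2 * p.1 / (8 * α) + β * p.2 / 8 - 3 * α * p.2 ^ 2 / β)
         / (3 * β ^ 2 / (4 * α) - p.2))) :
    -- (i) origin is a hyperbolic pseudo saddle–focus lying in Σˢ
    (Zt (0, 0) = (0, 0) ∧ (0 : ℝ) < 3 * β ^ 2 / (8 * α) ∧
      ∃ L : ℝ × ℝ →L[ℝ] ℝ × ℝ, HasFDerivAt Zt L (0, 0) ∧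
        ∃ lam : ℂ, lam.im ≠ 0 ∧ 0 < lam.re ∧
          (let M : Matrix (Fin 2) (Fin 2) ℂ :=
            !![((L (1, 0)).1 : ℂ), ((L (0, 1)).1 : ℂ);
               ((L (1, 0)).2 : ℂ), ((L (0, 1)).2 : ℂ)]
           (M - lam • (1 : Matrix (Fin 2) (Fin 2) ℂ)).det = 0 ∧
           (M - (starRingEnd ℂ) lam • (1 : Matrix (Fin 2) (Fin 2) ℂ)).det = 0)) ∧
    -- (ii) q is a visible fold–regular point of X
    ((X (3 * β / 2, 3 * β ^ 2 / (8 * α), 0)).2.2 = 0 ∧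
      fderiv ℝ (fun p : ℝ × ℝ × ℝ => (X p).2.2) (3 * β / 2, 3 * β ^ 2 / (8 * α), 0)
          (X (3 * β / 2, 3 * β ^ 2 / (8 * α), 0)) = β / 2 ∧
      0 < β / 2 ∧
      (Y (3 * β / 2, 3 * β ^ 2 / (8 * α), 0)).2.2 = 3 * β ^ 2 / (8 * α) ∧
      0 < 3 * β ^ 2 / (8 * α)) ∧
    -- (iii) sliding orbit converging backward in time to the pseudo-equilibrium
    (∃ f : ℝ → ℝ × ℝ,
      f 0 = (3 * β / 2, 3 * β ^ 2 / (8 * α)) ∧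
      (∀ t : ℝ, t ≤ 0 → HasDerivAt f (Zt (f t)) t) ∧
      (∀ t : ℝ, t < 0 → (f t).2 < 3 * β ^ 2 / (8 * α)) ∧
      Filter.Tendsto f Filter.atBot (nhds (0, 0))) ∧
    -- (iv) the orbit of X from q reaches the origin in finite positive time
    (∃ φ : ℝ → ℝ × ℝ × ℝ,
      φ 0 = (3 * β / 2, 3 * β ^ 2 / (8 * α), 0) ∧
      (∀ t : ℝ, HasDerivAt φ (X (φ t)) t) ∧
      (∀ t ∈ Set.Ioo (0 : ℝ) (3 * β / (2 * α)), 0 < (φ t).2.2) ∧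
      φ (3 * β / (2 * α)) = (0, 0, 0)) := by
  have hc : 0 < 3 * β ^ 2 / (8 * α) := by positivity
  refine ⟨⟨by simp [hZt], hc, origin_saddle_focus α β hα hβ Zt hZt⟩,
    ⟨by simp [hX], ?_, by positivity, by simp [hY], hc⟩,
    sliding_orbit α β hα hβ Zt hZt, flight_orbit α β hα X hX⟩
  have hd : HasFDerivAt (fun p : ℝ × ℝ × ℝ => (X p).2.2)
      ((ContinuousLinearMap.fst ℝ ℝ ℝ).comp (ContinuousLinearMap.snd ℝ ℝ (ℝ × ℝ)))
      (3 * β / 2, 3 * β ^ 2 / (8 * α), 0) := by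
    simp only [hX]
    exact (((ContinuousLinearMap.fst ℝ ℝ ℝ).comp
      (ContinuousLinearMap.snd ℝ ℝ (ℝ × ℝ))).hasFDerivAt).sub_const _
  rw [hd.fderiv, hX]
  simp
  ring
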